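/- arXiv:1005.5725 — 2 statements merged into one kernel-verified Lean document; each statement's English description precedes it below -/
import Mathlib

section
/- Let ν ∈ N_d(n), let j ∈ J(ν) be a break point of ν, and let ν^j be the unique maximal element of {η ∈ N_d(n) : η ≼ ν and s_j(η) > s_j(ν)} (which exists). Then δ(ν^j, ν) = 1, i.e. Σ_{i=1}^{n−1} (⌈s_i(ν^j)⌉ − ⌈s_i(ν)⌉) = 1. (GL_n instance of Lemma 2.2(3).) -/
/-- The `j`-th partial sum `s_j(ν) = ν_0 + … + ν_{j-1}` of a tuple (0-indexed). -/
def psum (ν : ℕ → ℚ) (j : ℕ) : ℚ := ∑ i ∈ Finset.range j, ν i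

/-- `ν` (given by its values on `{0, …, n-1}`) is a Newton point for `GL_n`
with endpoint `d`: nondecreasing, total sum `d`, and the partial sum at every
break point is an integer. -/
def IsNewton (n : ℕ) (d : ℤ) (ν : ℕ → ℚ) : Prop :=
  (∀ i, i + 1 < n → ν i ≤ ν (i + 1)) ∧
  psum ν n = (d : ℚ) ∧
  ∀ j, 0 < j → j < n → ν (j - 1) < ν j → ∃ m : ℤ, psum ν j = (m : ℚ)

/-- `j` is a break point of `ν` (in `1, …, n-1`; `ν (j-1) < ν j` is `ν_j < ν_{j+1}`
in the 1-based notation of the paper). -/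
def IsBreak (n : ℕ) (ν : ℕ → ℚ) (j : ℕ) : Prop := 0 < j ∧ j < n ∧ ν (j - 1) < ν j

/-- The dominance order: `ν' ≼ ν` iff `s_j(ν') ≥ s_j(ν)` for all `1 ≤ j ≤ n`. -/
def Preceq (n : ℕ) (ν' ν : ℕ → ℚ) : Prop := ∀ j, 1 ≤ j → j ≤ n → psum ν j ≤ psum ν' j

/-!
Raise the integer function `i ↦ ⌈s_i(ν)⌉` by one at `j`, and let `H` be the lower convex hull of
the result `F` on `{0, …, n}`. The vertices of `H` lie on the graph of `F`, so they are integral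
and the slopes of `H` form a Newton point. Since `s(ν)` is a convex minorant of `F`, it lies below
`H`. At `j` it does so strictly: either `H j = F j > s_j(ν)`, or `H` is affine near `j` while `s(ν)`
has a corner there. By maximality `s(ν^j) ≤ H ≤ F`, whence `⌈s(ν^j)⌉ ≤ F`; the reverse inequality
holds because `s(ν) ≤ s(ν^j)` and the integer `s_j(ν)` is strictly less than `s_j(ν^j)`.

The hull is built by gift wrapping from the left: from the current point one follows the chord of
least slope to a later point of the graph.
-/

open Finset fwdDiff

section Convex

variable {G : Type*} [AddCommGroup G] [PartialOrder G] [IsOrderedAddMonoid G]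

lemma add_nsmul_fwdDiff_le {g : ℕ → G} {n i : ℕ} (hg : MonotoneOn (Δ_[1] g) (Set.Iio n)) (m : ℕ)
    (hm : i + m ≤ n) : g i + m • Δ_[1] g i ≤ g (i + m) := by
  induction m with
  | zero => simp
  | succ m ih =>
    have hslope : Δ_[1] g i ≤ Δ_[1] g (i + m) :=
      hg (Set.mem_Iio.2 (by lia)) (Set.mem_Iio.2 (by lia)) (Nat.le_add_right i m)
    calc g i + (m + 1) • Δ_[1] g i = (g i + m • Δ_[1] g i) + Δ_[1] g i := by
          rw [succ_nsmul, add_assoc]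
      _ ≤ g (i + m) + Δ_[1] g (i + m) := add_le_add (ih (by lia)) hslope
      _ = g (i + (m + 1)) := by simp only [fwdDiff, add_assoc, add_sub_cancel]

end Convex

section LowerHull

variable {K : Type*} [Field K] [LinearOrder K]

/-- The least slope of a chord from `(i, y)` to a point `(b, f b)` with `i < b ≤ n`. To avoid an
empty minimum, `b = i + 1` is always allowed, even if it exceeds `n`. -/
def leastSlope (f : ℕ → K) (n i : ℕ) (y : K) : K :=
  (Icc (i + 1) (max (i + 1) n)).inf' (nonempty_Icc.2 (le_max_left _ _))
    fun b => (f b - y) / ((b : K) - i)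

/-- The lower convex hull of `f` on `{0, …, n}`, built by gift wrapping. It is continued by `f`
beyond `n`, where it need not be convex. -/
def lowerHull (f : ℕ → K) (n : ℕ) : ℕ → K
  | 0 => f 0
  | i + 1 => lowerHull f n i + leastSlope f n i (lowerHull f n i)

variable {f g : ℕ → K} {n i b : ℕ}

lemma lowerHull_succ (f : ℕ → K) (n i : ℕ) :
    lowerHull f n (i + 1) = lowerHull f n i + Δ_[1] (lowerHull f n) i :=
  (add_sub_cancel _ _).symm

lemma fwdDiff_lowerHull : Δ_[1] (lowerHull f n) i = leastSlope f n i (lowerHull f n i) := by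
  simp only [fwdDiff, lowerHull, add_sub_cancel_left]

lemma lowerHull_self (f : ℕ → K) (n : ℕ) : lowerHull f n n = f n := by
  cases n with
  | zero => rfl
  | succ n => simp [lowerHull, leastSlope]

variable [IsStrictOrderedRing K]

lemma lowerHull_add_fwdDiff_mul_le (hib : i < b) (hb : b ≤ max (i + 1) n) :
    lowerHull f n i + Δ_[1] (lowerHull f n) i * ((b : K) - i) ≤ f b := by
  have hpos : (0 : K) < b - i := sub_pos.2 (Nat.cast_lt.2 hib)
  rw [fwdDiff_lowerHull, ← le_sub_iff_add_le', ← le_div_iff₀ hpos]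
  exact inf'_le _ (mem_Icc.2 ⟨hib, hb⟩)

lemma exists_lowerHull_add_fwdDiff_mul_eq (f : ℕ → K) (n i : ℕ) :
    ∃ b, i < b ∧ b ≤ max (i + 1) n ∧
      lowerHull f n i + Δ_[1] (lowerHull f n) i * ((b : K) - i) = f b := by
  obtain ⟨b, hb, hslope⟩ := exists_mem_eq_inf' (nonempty_Icc.2 (le_max_left (i + 1) n))
    fun b => (f b - lowerHull f n i) / ((b : K) - i)
  obtain ⟨hib, hbn⟩ := mem_Icc.1 hb
  have hne : (b : K) - i ≠ 0 := (sub_pos.2 (Nat.cast_lt.2 hib)).ne'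
  refine ⟨b, hib, hbn, ?_⟩
  rw [fwdDiff_lowerHull, leastSlope, hslope, div_mul_cancel₀ _ hne, add_sub_cancel]

lemma lowerHull_le (f : ℕ → K) (n i : ℕ) : lowerHull f n i ≤ f i := by
  cases i with
  | zero => exact le_rfl
  | succ i =>
    simpa [fwdDiff] using lowerHull_add_fwdDiff_mul_le (f := f) i.lt_succ_self (le_max_left _ n)

lemma monotoneOn_fwdDiff_lowerHull (f : ℕ → K) (n : ℕ) :
    MonotoneOn (Δ_[1] (lowerHull f n)) (Set.Iio n) := by
  refine monotoneOn_of_le_add_one Set.ordConnected_Iio fun i _ _ hi => ?_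
  obtain ⟨b, hib, hb, hslope⟩ := exists_lowerHull_add_fwdDiff_mul_eq f n (i + 1)
  have hpos : (0 : K) < b - (i + 1 : ℕ) := sub_pos.2 (Nat.cast_lt.2 hib)
  have hle := lowerHull_add_fwdDiff_mul_le (f := f) (n := n) (i := i) (b := b) (by lia)
    (by rw [Set.mem_Iio] at hi; lia)
  have hstep := lowerHull_succ f n i
  refine le_of_mul_le_mul_right ?_ hpos
  push_cast at hslope ⊢
  linarith

lemma lowerHull_eq_of_fwdDiff_lt
    (hi : Δ_[1] (lowerHull f n) i < Δ_[1] (lowerHull f n) (i + 1)) :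
    lowerHull f n (i + 1) = f (i + 1) := by
  have hstep := lowerHull_succ f n i
  obtain ⟨b, hib, hb, hslope⟩ := exists_lowerHull_add_fwdDiff_mul_eq f n i
  obtain rfl | hib' : b = i + 1 ∨ i + 1 < b := by lia
  · simpa [fwdDiff] using hslope
  · -- The chord chosen at `i` is still available at `i + 1`, so the slope cannot increase there.
    have hle := lowerHull_add_fwdDiff_mul_le (f := f) (n := n) hib' (by lia)
    have hpos : (0 : K) < b - (i + 1 : ℕ) := sub_pos.2 (Nat.cast_lt.2 hib')
    have hlt := mul_lt_mul_of_pos_right hi hpos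
    push_cast at hle hlt
    linarith

lemma le_lowerHull (hg : MonotoneOn (Δ_[1] g) (Set.Iio n)) (hgf : ∀ i ≤ n, g i ≤ f i) :
    ∀ i ≤ n, g i ≤ lowerHull f n i := by
  intro i hi
  induction i with
  | zero => exact hgf 0 hi
  | succ i ih =>
    obtain ⟨b, hib, hb, hslope⟩ := exists_lowerHull_add_fwdDiff_mul_eq f n i
    obtain ⟨m, rfl⟩ := Nat.exists_eq_add_of_lt hib
    have hgb : g i + (m + 1) • Δ_[1] g i ≤ f (i + m + 1) :=
      (add_nsmul_fwdDiff_le hg (m + 1) (by lia)).trans (hgf _ (by lia))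
    have hgi : m * g i ≤ m * lowerHull f n i :=
      mul_le_mul_of_nonneg_left (ih (by lia)) m.cast_nonneg
    refine le_of_mul_le_mul_left ?_ (by positivity : (0 : K) < m + 1)
    rw [nsmul_eq_mul] at hgb
    simp only [fwdDiff] at hgb hslope
    push_cast at hgb hslope
    linarith

lemma lt_lowerHull (hg : MonotoneOn (Δ_[1] g) (Set.Iio n)) (hgf : ∀ i ≤ n, g i ≤ f i)
    (hi : i + 1 < n) (hbreak : Δ_[1] g i < Δ_[1] g (i + 1)) (hlt : g (i + 1) < f (i + 1)) :
    g (i + 1) < lowerHull f n (i + 1) := by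
  rcases lt_or_ge (Δ_[1] (lowerHull f n) i) (Δ_[1] (lowerHull f n) (i + 1)) with hH | hH
  · rwa [lowerHull_eq_of_fwdDiff_lt hH]
  · have hleft := le_lowerHull hg hgf i (by lia)
    have hright := le_lowerHull hg hgf (i + 1 + 1) hi
    simp only [fwdDiff] at hbreak hH
    linarith

end LowerHull

section Newton

variable {n j : ℕ} {d : ℤ} {ν : ℕ → ℚ}

lemma fwdDiff_psum (ν : ℕ → ℚ) : Δ_[1] (psum ν) = ν := by
  ext i
  simp only [fwdDiff, psum, sum_range_succ, add_sub_cancel_left]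

lemma psum_fwdDiff (g : ℕ → ℚ) (k : ℕ) : psum (Δ_[1] g) k = g k - g 0 :=
  sum_range_sub g k

lemma IsNewton.monotoneOn (hν : IsNewton n d ν) : MonotoneOn ν (Set.Iio n) :=
  monotoneOn_of_le_add_one Set.ordConnected_Iio fun i _ _ hi => hν.1 i hi

lemma isNewton_fwdDiff_lowerHull {F : ℕ → ℤ} (hF0 : F 0 = 0) (hFn : F n = d) :
    IsNewton n d (Δ_[1] (lowerHull (fun i => (F i : ℚ)) n)) := by
  have hpsum (k : ℕ) := psum_fwdDiff (lowerHull (fun i => (F i : ℚ)) n) k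
  simp only [lowerHull, hF0, Int.cast_zero, sub_zero] at hpsum
  refine ⟨fun i hi => ?_, ?_, fun k hk _ hlt => ?_⟩
  · exact monotoneOn_fwdDiff_lowerHull _ n (Set.mem_Iio.2 (by lia)) hi i.le_succ
  · rw [hpsum, lowerHull_self, hFn]
  · obtain ⟨k, rfl⟩ := Nat.exists_eq_add_one.2 hk
    exact ⟨F (k + 1), (hpsum _).trans (lowerHull_eq_of_fwdDiff_lt hlt)⟩

/-- The function `i ↦ ⌈s_i(ν)⌉`, raised by one at `j`. These turn out to be the ceilings of the
partial sums of `ν^j`. -/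
def raisedCeil (ν : ℕ → ℚ) (j i : ℕ) : ℤ := ⌈psum ν i⌉ + if i = j then 1 else 0

lemma raisedCeil_of_ne {i : ℕ} (hij : i ≠ j) : raisedCeil ν j i = ⌈psum ν i⌉ := by
  simp [raisedCeil, hij]

lemma psum_le_raisedCeil (ν : ℕ → ℚ) (j i : ℕ) : psum ν i ≤ raisedCeil ν j i := by
  refine Int.ceil_le.1 (le_add_of_nonneg_right ?_)
  split_ifs <;> simp

lemma psum_lt_raisedCeil_self (ν : ℕ → ℚ) (j : ℕ) : psum ν j < raisedCeil ν j j := by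
  simpa [raisedCeil] using (Int.le_ceil (psum ν j)).trans_lt (lt_add_one _)

theorem exists_isNewton_psum_le_raisedCeil (hν : IsNewton n d ν) (hj : IsBreak n ν j) :
    ∃ η, IsNewton n d η ∧ Preceq n η ν ∧ psum ν j < psum η j ∧
      ∀ i, psum η i ≤ raisedCeil ν j i := by
  obtain ⟨hj0, hjn, hbreak⟩ := hj
  set H := lowerHull (fun i => (raisedCeil ν j i : ℚ)) n with hH
  have hF0 : raisedCeil ν j 0 = 0 := by simp [raisedCeil_of_ne hj0.ne, psum]
  have hFn : raisedCeil ν j n = d := by rw [raisedCeil_of_ne hjn.ne', hν.2.1, Int.ceil_intCast]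
  have hpsum (i : ℕ) : psum (Δ_[1] H) i = H i := by
    simp [psum_fwdDiff, hH, lowerHull, hF0]
  have hconvex : MonotoneOn (Δ_[1] (psum ν)) (Set.Iio n) := by
    rw [fwdDiff_psum]
    exact hν.monotoneOn
  refine ⟨Δ_[1] H, isNewton_fwdDiff_lowerHull hF0 hFn, fun i _ hi => ?_, ?_, fun i => ?_⟩
  · rw [hpsum]
    exact le_lowerHull hconvex (fun i _ => psum_le_raisedCeil ν j i) i hi
  · obtain ⟨k, rfl⟩ := Nat.exists_eq_add_one.2 hj0
    rw [hpsum]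
    exact lt_lowerHull hconvex (fun i _ => psum_le_raisedCeil ν _ i) hjn
      (by rwa [fwdDiff_psum]) (psum_lt_raisedCeil_self ν _)
  · rw [hpsum]
    exact lowerHull_le _ n i

lemma raisedCeil_le_ceil_psum {μ : ℕ → ℚ} {i : ℕ} (hint : ∃ m : ℤ, psum ν j = m)
    (hi : psum ν i ≤ psum μ i) (hj : psum ν j < psum μ j) : raisedCeil ν j i ≤ ⌈psum μ i⌉ := by
  obtain rfl | hij := eq_or_ne i j
  · obtain ⟨m, hm⟩ := hint
    rw [raisedCeil, if_pos rfl, hm, Int.ceil_intCast, Int.add_one_le_iff, Int.lt_ceil, ← hm]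
    exact hj
  · rw [raisedCeil_of_ne hij]
    exact Int.ceil_le_ceil hi

theorem newton_max_below_breakpoint_delta_one_general {μ : ℕ → ℚ} (hν : IsNewton n d ν)
    (hj : IsBreak n ν j) (hprec : Preceq n μ ν) (hbrk : psum ν j < psum μ j)
    (hmax : ∀ η, IsNewton n d η → Preceq n η ν → psum ν j < psum η j → Preceq n η μ)
    {i : ℕ} (hi : 1 ≤ i) (hin : i ≤ n) :
    ⌈psum μ i⌉ = ⌈psum ν i⌉ + if i = j then 1 else 0 := by
  obtain ⟨η, hη, hην, hηj, hηF⟩ := exists_isNewton_psum_le_raisedCeil hν hj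
  have hint : ∃ m : ℤ, psum ν j = m := hν.2.2 j hj.1 hj.2.1 hj.2.2
  apply le_antisymm
  · exact Int.ceil_le.2 ((hmax η hη hην hηj i hi hin).trans (hηF i))
  · exact raisedCeil_le_ceil_psum hint (hprec i hi hin) hbrk

end Newton

/-- GL_n instance of Lemma 2.2(3): if `νj` is the unique maximal element of the set of
Newton points `η ≼ ν` with `s_j(η) > s_j(ν)` (for a break point `j` of `ν`), then
`δ(νj, ν) = Σ_{i=1}^{n-1} (⌈s_i(νj)⌉ - ⌈s_i(ν)⌉) = 1`. -/
theorem newton_max_below_breakpoint_delta_one (n : ℕ) (d : ℤ) (hn : 1 ≤ n)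
    (ν : ℕ → ℚ) (hν : IsNewton n d ν) (j : ℕ) (hj : IsBreak n ν j)
    (νj : ℕ → ℚ) (hνj : IsNewton n d νj) (hprec : Preceq n νj ν)
    (hbrk : psum ν j < psum νj j)
    (hmax : ∀ η : ℕ → ℚ, IsNewton n d η → Preceq n η ν → psum ν j < psum η j →
      Preceq n η νj) :
    ∑ i ∈ Finset.Icc 1 (n - 1), (⌈psum νj i⌉ - ⌈psum ν i⌉) = 1 := by
  have hdiff : ∀ i ∈ Icc 1 (n - 1), ⌈psum νj i⌉ - ⌈psum ν i⌉ = if i = j then 1 else 0 := by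
    intro i hi
    obtain ⟨hi1, hin⟩ := mem_Icc.1 hi
    exact sub_eq_of_eq_add' <|
      newton_max_below_breakpoint_delta_one_general hν hj hprec hbrk hmax hi1 (by lia)
  have hj_mem : j ∈ Icc 1 (n - 1) := mem_Icc.2 ⟨hj.1, Nat.le_sub_one_of_lt hj.2.1⟩
  rw [sum_congr rfl hdiff, sum_ite_eq', if_pos hj_mem]
end

section
/- Let ν', ν ∈ N_d(n) with ν' ≼ ν and δ(ν', ν) = 1. Then there exists a break point j ∈ J(ν) with s_j(ν') > s_j(ν), and for every break point j ∈ J(ν) with s_j(ν') > s_j(ν), the element ν' is the unique maximal element of {η ∈ N_d(n) : η ≼ ν and s_j(η) > s_j(ν)}; in particular every η ∈ N_d(n) with η ≼ ν and s_j(η) > s_j(ν) satisfies η ≼ ν'. (GL_n instance of Remark 2.3.) -/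
/-!
The difference `h = s(ν') - s(η)` of partial sums is convex at every index that is not a break point
of `η`, because `ν'` is nondecreasing. A discrete maximum principle therefore reduces `η ≼ ν'` to
the inequalities `s_i(ν') ≤ s_i(η)` at the break points `i` of `η`, where `s_i(η)` is an integer,
so that it suffices to compare ceilings. Since `δ(ν', ν) = 1`, the ceilings of `s(ν')` and `s(ν)`
differ at a single index, and only by one. That index is the given break point `j`, where
`s_j(η) > s_j(ν) ∈ ℤ` makes up for the difference. If `s(ν')` exceeded `s(ν)` at no
break point of `ν`, the same principle would give `s(ν') ≤ s(ν)`, hence `δ(ν', ν) ≤ 0`.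
-/

/-- The integer `δ(ν', ν)`, which measures how far `ν'` lies above `ν` by comparing the ceilings of
their partial sums at the interior indices. -/
def newtonDelta (n : ℕ) (ν' ν : ℕ → ℚ) : ℤ :=
  ∑ i ∈ Finset.Icc 1 (n - 1), (⌈psum ν' i⌉ - ⌈psum ν i⌉)

/-- The integrality condition on Newton points, as a condition on tuples that need not be
nondecreasing: the break points of such a tuple are its strict ascents. -/
def IntegralAtBreaks (n : ℕ) (ν : ℕ → ℚ) : Prop :=
  ∀ j, IsBreak n ν j → ∃ m : ℤ, psum ν j = m

theorem IsNewton.integralAtBreaks {n : ℕ} {d : ℤ} {ν : ℕ → ℚ} (hν : IsNewton n d ν) :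
    IntegralAtBreaks n ν :=
  fun j hj => hν.2.2 j hj.1 hj.2.1 hj.2.2

theorem psum_zero (ν : ℕ → ℚ) : psum ν 0 = 0 :=
  Finset.sum_range_zero ν

theorem psum_succ (ν : ℕ → ℚ) (j : ℕ) : psum ν (j + 1) = psum ν j + ν j :=
  Finset.sum_range_succ ν j

section MaximumPrinciple

variable {α : Type*} [AddCommGroup α] [LinearOrder α] [IsOrderedAddMonoid α] {h : ℕ → α} {n : ℕ}

theorem lt_succ_of_pos_of_convex_where_pos (h_zero : h 0 ≤ 0)
    (h_convex : ∀ k, k + 1 < n → 0 < h (k + 1) → h (k + 1) - h k ≤ h (k + 2) - h (k + 1)) :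
    ∀ k < n, 0 < h k → h k < h (k + 1) := by
  intro k
  induction k with
  | zero => exact fun _ h_pos => absurd h_pos h_zero.not_gt
  | succ k ih =>
    intro hk h_pos
    have h_lt : h k < h (k + 1) :=
      (le_or_gt (h k) 0).elim (·.trans_lt h_pos) (ih (k.lt_succ_self.trans hk))
    exact sub_pos.1 ((sub_pos.2 h_lt).trans_le (h_convex k hk h_pos))

theorem nonpos_of_convex_where_pos (h_zero : h 0 ≤ 0) (h_end : h n ≤ 0)
    (h_convex : ∀ k, k + 1 < n → 0 < h (k + 1) → h (k + 1) - h k ≤ h (k + 2) - h (k + 1))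
    {k : ℕ} (hk : k ≤ n) : h k ≤ 0 := by
  induction hk using Nat.decreasingInduction with
  | self => exact h_end
  | of_succ k hk h_succ =>
    by_contra! h_pos
    exact (h_pos.trans (lt_succ_of_pos_of_convex_where_pos h_zero h_convex k hk h_pos)).not_ge
      h_succ

end MaximumPrinciple

theorem le_of_sum_sub_le_one {ι : Type*} {s : Finset ι} {a a' b : ι → ℤ}
    (ha' : ∀ i ∈ s, a i ≤ a' i) (hb : ∀ i ∈ s, a i ≤ b i) (hsum : ∑ i ∈ s, (a' i - a i) ≤ 1)
    {j : ι} (hj : j ∈ s) (ha'j : a j < a' j) (hbj : a j < b j) {i : ι} (hi : i ∈ s) :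
    a' i ≤ b i := by
  have h_nonneg : ∀ k ∈ s, 0 ≤ a' k - a k := fun k hk => sub_nonneg.2 (ha' k hk)
  obtain rfl | hij := eq_or_ne i j
  · have h_single : a' i - a i ≤ 1 := (Finset.single_le_sum h_nonneg hi).trans hsum
    lia
  · have h_pair : (a' i - a i) + (a' j - a j) ≤ 1 :=
      (Finset.add_le_sum h_nonneg hi hj hij).trans hsum
    have h_le : a' i ≤ a i := by lia
    exact h_le.trans (hb i hi)

section NewtonPoints

variable {n : ℕ} {ν' ν η : ℕ → ℚ}

theorem preceq_of_psum_le_at_breaks (h_mono : ∀ i, i + 1 < n → ν' i ≤ ν' (i + 1))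
    (h_end : psum ν' n ≤ psum η n) (h_breaks : ∀ j, IsBreak n η j → psum ν' j ≤ psum η j) :
    Preceq n η ν' := by
  intro j _ hj
  refine sub_nonpos.1 (nonpos_of_convex_where_pos (h := fun k => psum ν' k - psum η k)
    (by simp [psum_zero]) (sub_nonpos.2 h_end) (fun k hk h_pos => ?_) hj)
  have h_descent : η (k + 1) ≤ η k := by
    by_contra! h_ascent
    exact (h_breaks (k + 1) ⟨k.succ_pos, hk, h_ascent⟩).not_gt (sub_pos.1 h_pos)
  have h_mono_k := h_mono k hk
  simp only [psum_succ]
  linarith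

theorem newtonDelta_nonpos_of_preceq (h : Preceq n ν ν') : newtonDelta n ν' ν ≤ 0 := by
  refine Finset.sum_nonpos fun i hi => sub_nonpos.2 (Int.ceil_mono ?_)
  rw [Finset.mem_Icc] at hi
  exact h i hi.1 (by lia)

theorem exists_isBreak_psum_lt (h_mono : ∀ i, i + 1 < n → ν' i ≤ ν' (i + 1))
    (h_end : psum ν' n ≤ psum ν n) (h_delta : 0 < newtonDelta n ν' ν) :
    ∃ j, IsBreak n ν j ∧ psum ν j < psum ν' j := by
  by_contra! h_breaks
  have h_preceq : Preceq n ν ν' := preceq_of_psum_le_at_breaks h_mono h_end h_breaks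
  exact (newtonDelta_nonpos_of_preceq h_preceq).not_gt h_delta

theorem IsBreak.mem_Icc {j : ℕ} (hj : IsBreak n ν j) : j ∈ Finset.Icc 1 (n - 1) :=
  Finset.mem_Icc.2 ⟨hj.1, Nat.le_sub_one_of_lt hj.2.1⟩

theorem Preceq.ceil_psum_le (h : Preceq n ν' ν) {i : ℕ} (hi : i ∈ Finset.Icc 1 (n - 1)) :
    ⌈psum ν i⌉ ≤ ⌈psum ν' i⌉ := by
  rw [Finset.mem_Icc] at hi
  exact Int.ceil_mono (h i hi.1 (by lia))

theorem ceil_psum_le_of_newtonDelta_le_one (hν' : Preceq n ν' ν) (hη : Preceq n η ν)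
    (h_delta : newtonDelta n ν' ν ≤ 1) {j : ℕ} (hj : j ∈ Finset.Icc 1 (n - 1))
    (h_int : ∃ m : ℤ, psum ν j = m) (hν'j : psum ν j < psum ν' j) (hηj : psum ν j < psum η j)
    {i : ℕ} (hi : i ∈ Finset.Icc 1 (n - 1)) : ⌈psum ν' i⌉ ≤ ⌈psum η i⌉ := by
  obtain ⟨m, hm⟩ := h_int
  have h_ceil_lt {x : ℚ} (hx : psum ν j < x) : ⌈psum ν j⌉ < ⌈x⌉ := by
    rw [hm] at hx ⊢
    rwa [Int.ceil_intCast, Int.lt_ceil]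
  exact le_of_sum_sub_le_one (fun _ => hν'.ceil_psum_le) (fun _ => hη.ceil_psum_le) h_delta hj
    (h_ceil_lt hν'j) (h_ceil_lt hηj) hi

theorem preceq_of_newtonDelta_le_one (h_mono : ∀ i, i + 1 < n → ν' i ≤ ν' (i + 1))
    (h_end : psum ν' n ≤ psum η n) (hη_int : IntegralAtBreaks n η)
    (hν' : Preceq n ν' ν) (hη : Preceq n η ν) (h_delta : newtonDelta n ν' ν ≤ 1)
    {j : ℕ} (hj : j ∈ Finset.Icc 1 (n - 1)) (h_int : ∃ m : ℤ, psum ν j = m)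
    (hν'j : psum ν j < psum ν' j) (hηj : psum ν j < psum η j) : Preceq n η ν' := by
  refine preceq_of_psum_le_at_breaks h_mono h_end fun i hi => ?_
  have h_ceil := ceil_psum_le_of_newtonDelta_le_one hν' hη h_delta hj h_int hν'j hηj hi.mem_Icc
  obtain ⟨m, hm⟩ := hη_int i hi
  rw [hm, Int.ceil_intCast] at h_ceil
  exact (Int.ceil_le.1 h_ceil).trans_eq hm.symm

end NewtonPoints

theorem newton_delta_one_is_max_below_breakpoint_general {n : ℕ} {ν' ν : ℕ → ℚ}
    (h_mono : ∀ i, i + 1 < n → ν' i ≤ ν' (i + 1)) (h_end : psum ν' n = psum ν n)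
    (hν : IntegralAtBreaks n ν) (hprec : Preceq n ν' ν) (hdelta : newtonDelta n ν' ν = 1) :
    (∃ j, IsBreak n ν j ∧ psum ν j < psum ν' j) ∧
    ∀ j, IsBreak n ν j → psum ν j < psum ν' j →
      ∀ η : ℕ → ℚ, IntegralAtBreaks n η → Preceq n η ν → psum ν j < psum η j →
        Preceq n η ν' := by
  refine ⟨exists_isBreak_psum_lt h_mono h_end.le (by lia), fun j hj hν'j η hη hην hηj => ?_⟩
  have h_end_le : psum ν' n ≤ psum η n :=
    h_end.trans_le (hην n (Nat.one_le_of_lt hj.2.1) le_rfl)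
  exact preceq_of_newtonDelta_le_one h_mono h_end_le hη hprec hην hdelta.le hj.mem_Icc (hν j hj)
    hν'j hηj

/-- GL_n instance of Remark 2.3: if `ν' ≼ ν` with `δ(ν', ν) = 1`, then some break
point `j` of `ν` satisfies `s_j(ν') > s_j(ν)`, and for every such break point `j`,
`ν'` is the (unique) maximal element of `{η : η ≼ ν, s_j(η) > s_j(ν)}`; in
particular every `η ≼ ν` with `s_j(η) > s_j(ν)` satisfies `η ≼ ν'`. -/
theorem newton_delta_one_is_max_below_breakpoint (n : ℕ) (d : ℤ) (hn : 1 ≤ n)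
    (ν' ν : ℕ → ℚ) (hν' : IsNewton n d ν') (hν : IsNewton n d ν)
    (hprec : Preceq n ν' ν)
    (hdelta : ∑ i ∈ Finset.Icc 1 (n - 1), (⌈psum ν' i⌉ - ⌈psum ν i⌉) = 1) :
    (∃ j, IsBreak n ν j ∧ psum ν j < psum ν' j) ∧
    ∀ j, IsBreak n ν j → psum ν j < psum ν' j →
      ∀ η : ℕ → ℚ, IsNewton n d η → Preceq n η ν → psum ν j < psum η j →
        Preceq n η ν' := by
  obtain ⟨h_exists, h_max⟩ := newton_delta_one_is_max_below_breakpoint_general hν'.1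
    (hν'.2.1.trans hν.2.1.symm) hν.integralAtBreaks hprec hdelta
  exact ⟨h_exists, fun j hj hlt η hη => h_max j hj hlt η hη.integralAtBreaks⟩
end
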